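/- arXiv:hep-th/0612180 — 2 statements merged into one kernel-verified Lean document; each statement's English description precedes it below -/
import Mathlib

section
/- For every measurable function f : ℝ⁴ → [0, ∞], the conformal inversion k ↦ k/‖k‖² is a change of variables for the Lebesgue integral: ∫_{ℝ⁴} f(x) dx = ∫_{ℝ⁴} f(y/‖y‖²) · ‖y‖^{−8} dy. -/
open MeasureTheory

/-!
Away from its center `c`, the inversion of radius `R` has derivative `(R / dist x c) ^ 2` times a
reflection. A reflection is an isometry, so in dimension `n` the Jacobian is
`(R / dist x c) ^ (2 * n)`. The inversion permutes the complement of `{c}`, which has full measure.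
-/

section Inversion

open EuclideanGeometry Module
open scoped ENNReal

variable {E : Type*} [NormedAddCommGroup E] [InnerProductSpace ℝ E]

theorem inversion_zero_one (x : E) : inversion 0 1 x = (‖x‖ ^ 2)⁻¹ • x := by
  simp [inversion]

theorem image_inversion_compl_center (c : E) {R : ℝ} (hR : R ≠ 0) :
    inversion c R '' {c}ᶜ = {c}ᶜ := by
  rw [Set.image_compl_eq (inversion_bijective c hR), Set.image_singleton, inversion_self]

variable [FiniteDimensional ℝ E]

theorem abs_det_fderiv_inversion {c x : E} (R : ℝ) (hx : x ≠ c) :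
    |(fderiv ℝ (inversion c R) x).det| = (R / dist x c) ^ (2 * finrank ℝ E) := by
  let ρ : E →ₗᵢ[ℝ] E := (ℝ ∙ (x - c))ᗮ.reflection.toLinearIsometry
  calc
    |(fderiv ℝ (inversion c R) x).det| = ((R / dist x c) ^ 2 • ρ.toLinearMap).normDet := by
      rw [(hasFDerivAt_inversion hx).fderiv, LinearMap.normDet_eq_abs_det]
      rfl
    _ = ((R / dist x c) ^ 2) ^ finrank ℝ E := by
      rw [LinearMap.normDet_smul, ρ.normDet_eq_one, mul_one, Real.norm_of_nonneg (sq_nonneg _)]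
    _ = (R / dist x c) ^ (2 * finrank ℝ E) := (pow_mul _ _ _).symm

theorem conformal_inversion_change_of_variables_general
    [Nontrivial E] [MeasurableSpace E] [BorelSpace E] (μ : Measure E) [μ.IsAddHaarMeasure]
    (c : E) {R : ℝ} (hR : R ≠ 0) (f : E → ℝ≥0∞) :
    ∫⁻ x, f x ∂μ =
      ∫⁻ y, f (inversion c R y) * ENNReal.ofReal ((R / dist y c) ^ (2 * finrank ℝ E)) ∂μ := by
  have h_meas : MeasurableSet ({c}ᶜ : Set E) := (measurableSet_singleton c).compl
  have h_deriv : ∀ x ∈ ({c}ᶜ : Set E),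
      HasFDerivWithinAt (inversion c R) (fderiv ℝ (inversion c R) x) {c}ᶜ x := fun _ hx ↦
    (hasFDerivAt_inversion hx).differentiableAt.hasFDerivAt.hasFDerivWithinAt
  calc
    ∫⁻ x, f x ∂μ = ∫⁻ x in inversion c R '' {c}ᶜ, f x ∂μ := by
      rw [image_inversion_compl_center c hR, restrict_compl_singleton]
    _ = ∫⁻ y in {c}ᶜ,
          ENNReal.ofReal |(fderiv ℝ (inversion c R) y).det| * f (inversion c R y) ∂μ :=
      lintegral_image_eq_lintegral_abs_det_fderiv_mul μ h_meas h_deriv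
        (inversion_injective c hR).injOn f
    _ = ∫⁻ y in {c}ᶜ,
          f (inversion c R y) * ENNReal.ofReal ((R / dist y c) ^ (2 * finrank ℝ E)) ∂μ :=
      setLIntegral_congr_fun h_meas fun y hy ↦ by
        rw [abs_det_fderiv_inversion R hy, mul_comm]
    _ = ∫⁻ y, f (inversion c R y) * ENNReal.ofReal ((R / dist y c) ^ (2 * finrank ℝ E)) ∂μ := by
      rw [restrict_compl_singleton]

end Inversion

/-- **Conformal inversion as a change of variables in `ℝ⁴`.**
For every measurable `f : ℝ⁴ → [0,∞]`, the inversion `k ↦ k/‖k‖²` transforms the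
Lebesgue integral as `∫ f(x) dx = ∫ f(y/‖y‖²) ‖y‖⁻⁸ dy`. -/
theorem conformal_inversion_change_of_variables
    (f : EuclideanSpace ℝ (Fin 4) → ENNReal) (hf : Measurable f) :
    ∫⁻ x : EuclideanSpace ℝ (Fin 4), f x =
      ∫⁻ y : EuclideanSpace ℝ (Fin 4),
        f ((‖y‖ ^ 2 : ℝ)⁻¹ • y) * ENNReal.ofReal (‖y‖ ^ (-8 : ℝ)) := by
  simpa [inversion_zero_one] using
    conformal_inversion_change_of_variables_general volume 0 one_ne_zero f
end

section
/- For every real γ with 0 < γ < 1, the two forms of the two-loop contribution to the Dyson–Schwinger equation agree: 4 · Σ_{n=1}^{∞} n · ζ(2n+1) · (1 − 4^{−n}) · [ γ^{2n−2} + (1−γ)^{2n−2} ] = −(1/γ)[ψ′(1+γ) − ψ′(1−γ)] − (1/(1−γ))[ψ′(2−γ) − ψ′(γ)] + (1/(2γ))[ψ′(1+γ/2) − ψ′(1−γ/2)] + (1/(2(1−γ)))[ψ′((3−γ)/2) − ψ′((1+γ)/2)]. -/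
/-- The Riemann zeta value `ζ(s) = ∑_{k=1}^∞ k^(−s)` for a natural exponent `s`. -/
noncomputable def zetaR (s : ℕ) : ℝ := ∑' k : ℕ, 1 / ((k : ℝ) + 1) ^ s

/-- The trigamma function `ψ′(z) = ∑_{m=0}^∞ 1/(m+z)²`. -/
noncomputable def trigamma (z : ℝ) : ℝ := ∑' m : ℕ, 1 / ((m : ℝ) + z) ^ 2

/-! Expanding each term of `ψ′(1 - x)` as a geometric-type series in `x` and exchanging the
summations gives `ψ′(1 - x) = ∑ (n + 1) ζ(n + 2) x ^ n` for `|x| < 1`. The odd part of this series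
is a generating function for the `(n + 1) ζ(2n + 3)`, and the weight `1 - 4 ^ (-(n + 1))` comes from
subtracting the same generating function at `x / 2`. The two halves of the two-loop sum are its
values at `x = γ` and `x = 1 - γ`. -/

lemma hasSum_succ_mul_pow_div_pow {𝕜 : Type*} [NormedField 𝕜] [HasSummableGeomSeries 𝕜] {a x : 𝕜}
    (hx : ‖x‖ < ‖a‖) :
    HasSum (fun n : ℕ => ((n : 𝕜) + 1) * x ^ n / a ^ (n + 2)) (1 / (a - x) ^ 2) := by
  have ha : a ≠ 0 := norm_pos_iff.1 ((norm_nonneg x).trans_lt hx)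
  have hratio : ‖x / a‖ < 1 := by
    rwa [norm_div, div_lt_one (norm_pos_iff.2 ha)]
  have hgeom : HasSum (fun n : ℕ => ((n : 𝕜) + 1) * (x / a) ^ n) (1 / (1 - x / a) ^ 2) := by
    simpa using hasSum_choose_mul_geometric_of_norm_lt_one 1 hratio
  have hvalue : 1 / (a - x) ^ 2 = 1 / a ^ 2 * (1 / (1 - x / a) ^ 2) := by
    rw [one_sub_div ha, one_div_mul_one_div, ← mul_pow, mul_div_cancel₀ _ ha]
  rw [hvalue]
  refine (hgeom.mul_left (1 / a ^ 2)).congr_fun fun n => ?_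
  rw [div_pow, pow_add]
  field_simp

lemma summable_one_div_nat_add_sq (z : ℝ) : Summable fun m : ℕ => 1 / ((m : ℝ) + z) ^ 2 := by
  simpa using (Real.summable_one_div_nat_add_rpow z 2).2 one_lt_two

lemma hasSum_zetaR {s : ℕ} (hs : 1 < s) :
    HasSum (fun k : ℕ => 1 / ((k : ℝ) + 1) ^ s) (zetaR s) := by
  have h := (summable_nat_add_iff 1).2 (Real.summable_one_div_nat_pow.2 hs)
  simp only [Nat.cast_add, Nat.cast_one] at h
  exact h.hasSum

section Expansion

variable {x : ℝ} (hx : |x| < 1)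
include hx

lemma hasSum_trigamma_term_expansion (k : ℕ) :
    HasSum (fun n : ℕ => ((n : ℝ) + 1) * x ^ n / ((k : ℝ) + 1) ^ (n + 2))
      (1 / ((k : ℝ) + (1 - x)) ^ 2) := by
  rw [← add_sub_assoc]
  refine hasSum_succ_mul_pow_div_pow ?_
  rw [Real.norm_eq_abs, Real.norm_of_nonneg (by positivity)]
  exact hx.trans_le (le_add_of_nonneg_left k.cast_nonneg)

lemma summable_trigamma_expansion :
    Summable fun p : ℕ × ℕ => ((p.2 : ℝ) + 1) * x ^ p.2 / ((p.1 : ℝ) + 1) ^ (p.2 + 2) := by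
  have hrow := hasSum_trigamma_term_expansion (x := |x|) (by rwa [abs_abs])
  have habs : Summable fun p : ℕ × ℕ =>
      ((p.2 : ℝ) + 1) * |x| ^ p.2 / ((p.1 : ℝ) + 1) ^ (p.2 + 2) := by
    refine (summable_prod_of_nonneg fun p => ?_).2 ⟨fun k => (hrow k).summable, ?_⟩
    · simp only [Pi.zero_apply]
      positivity
    · simpa only [(hrow _).tsum_eq] using summable_one_div_nat_add_sq (1 - |x|)
  refine habs.of_norm_bounded fun p => ?_
  have hn : |(p.2 : ℝ) + 1| = p.2 + 1 := abs_of_nonneg (by positivity)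
  have hk : |(p.1 : ℝ) + 1| = p.1 + 1 := abs_of_nonneg (by positivity)
  rw [Real.norm_eq_abs, abs_div, abs_mul, abs_pow, abs_pow, hn, hk]

lemma hasSum_trigamma_one_sub :
    HasSum (fun n : ℕ => ((n : ℝ) + 1) * zetaR (n + 2) * x ^ n) (trigamma (1 - x)) := by
  have hdouble := (summable_trigamma_expansion hx).hasSum
  have hrows := hdouble.prod_fiberwise (hasSum_trigamma_term_expansion hx)
  rw [hrows.unique (summable_one_div_nat_add_sq (1 - x)).hasSum] at hdouble
  refine ((Equiv.prodComm ℕ ℕ).hasSum_iff.2 hdouble).prod_fiberwise fun n => ?_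
  rw [mul_right_comm]
  exact ((hasSum_zetaR (by lia)).mul_left _).congr_fun fun k => div_eq_mul_one_div _ _

lemma hasSum_trigamma_one_sub_sub_trigamma_one_add :
    HasSum (fun n : ℕ => 4 * (((n : ℝ) + 1) * zetaR (2 * n + 3) * x ^ (2 * n + 1)))
      (trigamma (1 - x) - trigamma (1 + x)) := by
  have hneg := hasSum_trigamma_one_sub (x := -x) (by rwa [abs_neg])
  rw [sub_neg_eq_add] at hneg
  have hinj : Function.Injective fun n : ℕ => 2 * n + 1 := fun m n h => by lia
  have hodd := (hinj.hasSum_iff fun m hm => ?_).2 ((hasSum_trigamma_one_sub hx).sub hneg)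
  · refine hodd.congr_fun fun n => ?_
    rw [Function.comp_apply, (odd_two_mul_add_one n).neg_pow]
    push_cast
    ring
  · have heven : Even m := Nat.not_odd_iff_even.1 fun ⟨n, hn⟩ => hm ⟨n, hn.symm⟩
    rw [heven.neg_pow, sub_self]

lemma hasSum_one_sub_four_pow_mul_zetaR_odd (hx₀ : x ≠ 0) :
    HasSum (fun n : ℕ => 4 * (((n : ℝ) + 1) * zetaR (2 * n + 3) *
        (1 - 1 / (4 : ℝ) ^ (n + 1)) * x ^ (2 * n)))
      (1 / x * (trigamma (1 - x) - trigamma (1 + x)) -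
        1 / (2 * x) * (trigamma (1 - x / 2) - trigamma (1 + x / 2))) := by
  have hx₂ : |x / 2| < 1 := by
    rw [abs_div, abs_two]
    linarith [abs_nonneg x]
  have hfull := (hasSum_trigamma_one_sub_sub_trigamma_one_add hx).mul_left (1 / x)
  have hhalf := (hasSum_trigamma_one_sub_sub_trigamma_one_add hx₂).mul_left (1 / (2 * x))
  refine (hfull.sub hhalf).congr_fun fun n => ?_
  have hpow : (x / 2) ^ (2 * n + 1) = x ^ (2 * n + 1) / (2 * 4 ^ n) := by
    rw [div_pow, pow_succ' 2, pow_mul 2]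
    norm_num
  rw [hpow, pow_succ 4, pow_succ x]
  field_simp
  ring

end Expansion

/-- **Agreement of the two forms of the two-loop contribution to the DSE.**
For `0 < γ < 1`,
`4 ∑_{n≥1} n ζ(2n+1)(1−4^(−n)) [γ^(2n−2) + (1−γ)^(2n−2)]
 = −(1/γ)[ψ′(1+γ)−ψ′(1−γ)] − (1/(1−γ))[ψ′(2−γ)−ψ′(γ)]
   + (1/(2γ))[ψ′(1+γ/2)−ψ′(1−γ/2)] + (1/(2(1−γ)))[ψ′((3−γ)/2)−ψ′((1+γ)/2)]`.
(The sum over `n ≥ 1` is indexed by `n+1` for `n : ℕ`.) -/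
theorem two_loop_DSE_series_eq_trigamma (γ : ℝ) (hγ₀ : 0 < γ) (hγ₁ : γ < 1) :
    4 * ∑' n : ℕ, ((n : ℝ) + 1) * zetaR (2 * n + 3) *
        (1 - 1 / (4 : ℝ) ^ (n + 1)) * (γ ^ (2 * n) + (1 - γ) ^ (2 * n)) =
      -(1 / γ) * (trigamma (1 + γ) - trigamma (1 - γ)) -
        (1 / (1 - γ)) * (trigamma (2 - γ) - trigamma γ) +
        (1 / (2 * γ)) * (trigamma (1 + γ / 2) - trigamma (1 - γ / 2)) +
        (1 / (2 * (1 - γ))) *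
          (trigamma ((3 - γ) / 2) - trigamma ((1 + γ) / 2)) := by
  have hγ_abs : |γ| < 1 := by rwa [abs_of_pos hγ₀]
  have hγ_one_sub : |1 - γ| < 1 := by rw [abs_of_pos] <;> linarith
  have hsum := (hasSum_one_sub_four_pow_mul_zetaR_odd hγ_abs hγ₀.ne').add
    (hasSum_one_sub_four_pow_mul_zetaR_odd hγ_one_sub (sub_pos.2 hγ₁).ne')
  have hadd : 1 + (1 - γ) = 2 - γ := by ring
  have hsub : 1 - (1 - γ) = γ := by ring
  have hadd_half : 1 + (1 - γ) / 2 = (3 - γ) / 2 := by ring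
  have hsub_half : 1 - (1 - γ) / 2 = (1 + γ) / 2 := by ring
  simp only [← mul_add, hadd, hsub, hadd_half, hsub_half] at hsum
  rw [← tsum_mul_left, hsum.tsum_eq]
  ring
end
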